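/- Let Z ∈ ℝ^{n×m}, e ∈ ℝ^n, U, Û ∈ ℝ^{m×q}, g, ĝ ∈ ℝ^q, and set y = ZUg + e, Δ = Ûĝ − Ug, Δ_u = Û − U, Δ_g = ĝ − g. Let S = {(i,j) : U(i,j) ≠ 0} and suppose S has at most s elements. Let λ > 0, α > 0, and τ_u, τ_g ≥ 0. Assume: (i) n⁻¹‖y − ZÛĝ‖₂² + λ‖Û‖₁ ≤ n⁻¹‖y − ZUg‖₂² + λ‖U‖₁; (ii) ⟨n⁻¹Zᵀe, Δ_u·ĝ⟩ ≤ λ‖Δ_u‖₁/4 and ⟨n⁻¹Zᵀe, U·Δ_g⟩ ≤ λ‖Δ_g‖₁/4; (iii) n⁻¹‖ZΔ‖₂² ≥ (α/2)·‖Δ‖₂²; (iv) ‖Δ_u‖_F ≤ τ_u·‖Δ‖₂ and ‖Δ_g‖₂ ≤ τ_g·‖Δ‖₂. Then ‖Δ‖₂ ≤ λ(√q·τ_g + 3√s·τ_u)/α and n⁻¹‖ZΔ‖₂² ≤ λ²(√q·τ_g + 3√s·τ_u)²/(2α). -/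

import Mathlib

open scoped BigOperators
open Matrix

/-- Euclidean norm of a vector. -/
noncomputable def l2 {ι : Type*} [Fintype ι] (v : ι → ℝ) : ℝ :=
  Real.sqrt (∑ i, v i ^ 2)

/-- Euclidean inner product of two vectors. -/
def inn {ι : Type*} [Fintype ι] (u v : ι → ℝ) : ℝ :=
  ∑ i, u i * v i

/-- Entrywise ℓ1 norm of a matrix. -/
def l1 {m q : ℕ} (M : Matrix (Fin m) (Fin q) ℝ) : ℝ :=
  ∑ i, ∑ j, |M i j|

/-- Frobenius norm of a matrix. -/
noncomputable def frob {m q : ℕ} (M : Matrix (Fin m) (Fin q) ℝ) : ℝ :=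
  Real.sqrt (∑ i, ∑ j, (M i j) ^ 2)

lemma l2_sq_aux {ι : Type*} [Fintype ι] (v : ι → ℝ) : l2 v ^ 2 = ∑ i, v i ^ 2 :=
  Real.sq_sqrt (Finset.sum_nonneg fun i _ => sq_nonneg _)

lemma cs_aux {ι : Type*} (K : Finset ι) (f : ι → ℝ) :
    ∑ i ∈ K, |f i| ≤ Real.sqrt K.card * Real.sqrt (∑ i ∈ K, f i ^ 2) := by
  rw [← Real.sqrt_mul (Nat.cast_nonneg _)]
  apply Real.le_sqrt_of_sq_le
  have := sq_sum_le_card_mul_sum_sq (s := K) (f := fun i => |f i|)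
  simpa [sq_abs] using this

lemma inn_aux {n m : ℕ} (c : ℝ) (Z : Matrix (Fin n) (Fin m) ℝ) (e : Fin n → ℝ) (v : Fin m → ℝ) :
    inn (c • Zᵀ.mulVec e) v = c * ∑ i, e i * Z.mulVec v i := by
  change (c • Zᵀ.mulVec e) ⬝ᵥ v = c * (e ⬝ᵥ Z.mulVec v)
  rw [smul_dotProduct, Matrix.mulVec_transpose, Matrix.dotProduct_mulVec, smul_eq_mul]

lemma l1_aux {m q : ℕ} (U V D : Matrix (Fin m) (Fin q) ℝ) (hD : D = V - U) (s : ℕ)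
    (hS : (Finset.univ.filter fun ij : Fin m × Fin q => U ij.1 ij.2 ≠ 0).card ≤ s) :
    l1 U - l1 V + l1 D / 2 ≤ 3 / 2 * (Real.sqrt s * frob D) := by
  unfold l1 frob
  simp only [← Fintype.sum_prod_type']
  set K := Finset.univ.filter fun ij : Fin m × Fin q => U ij.1 ij.2 ≠ 0 with hK
  have h1 := cs_aux K (fun x => D x.1 x.2)
  have h2 : Real.sqrt K.card * Real.sqrt (∑ x ∈ K, D x.1 x.2 ^ 2) ≤
      Real.sqrt s * Real.sqrt (∑ x : Fin m × Fin q, D x.1 x.2 ^ 2) := by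
    apply mul_le_mul _ _ (Real.sqrt_nonneg _) (Real.sqrt_nonneg _)
    · exact Real.sqrt_le_sqrt (by exact_mod_cast hS)
    · exact Real.sqrt_le_sqrt (Finset.sum_le_sum_of_subset_of_nonneg (Finset.subset_univ _)
        fun i _ _ => sq_nonneg _)
  have h3 : ∑ x : Fin m × Fin q, |U x.1 x.2| - ∑ x : Fin m × Fin q, |V x.1 x.2|
      + (∑ x : Fin m × Fin q, |D x.1 x.2|) / 2 ≤ 3 / 2 * ∑ x ∈ K, |D x.1 x.2| := by
    rw [hK, Finset.sum_filter, Finset.mul_sum, Finset.sum_div, ← Finset.sum_sub_distrib,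
      ← Finset.sum_add_distrib]
    apply Finset.sum_le_sum
    rintro x -
    subst hD
    split_ifs with h
    · have := abs_sub_abs_le_abs_sub (U x.1 x.2) (V x.1 x.2)
      rw [abs_sub_comm] at this
      simp only [Matrix.sub_apply]
      linarith
    · have h0 : U x.1 x.2 = 0 := by simpa using h
      have := abs_nonneg (V x.1 x.2)
      simp only [Matrix.sub_apply, h0, sub_zero, abs_zero]
      linarith
  linarith

/-- **Deterministic error bound for the regularized estimator.** Under the
basic inequality (i), the deviation bounds (ii), the restricted eigenvalue
condition (iii), and the perturbation bounds (iv), the estimation and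
in-sample prediction errors satisfy
`‖Δ‖₂ ≤ λ(√q·τ_g + 3√s·τ_u)/α` and `n⁻¹‖ZΔ‖₂² ≤ λ²(√q·τ_g + 3√s·τ_u)²/(2α)`. -/
theorem deterministic_error_bound {n m q : ℕ}
    (Z : Matrix (Fin n) (Fin m) ℝ) (e : Fin n → ℝ)
    (U Uhat : Matrix (Fin m) (Fin q) ℝ) (g ghat : Fin q → ℝ)
    (y : Fin n → ℝ) (hy : y = Z.mulVec (U.mulVec g) + e)
    (Δ : Fin m → ℝ) (hΔ : Δ = Uhat.mulVec ghat - U.mulVec g)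
    (Δu : Matrix (Fin m) (Fin q) ℝ) (hΔu : Δu = Uhat - U)
    (Δg : Fin q → ℝ) (hΔg : Δg = ghat - g)
    (s : ℕ)
    (hS : (Finset.univ.filter fun ij : Fin m × Fin q => U ij.1 ij.2 ≠ 0).card ≤ s)
    (lam α τu τg : ℝ) (hlam : 0 < lam) (hα : 0 < α) (hτu : 0 ≤ τu) (hτg : 0 ≤ τg)
    (hbasic : (n : ℝ)⁻¹ * (l2 (y - Z.mulVec (Uhat.mulVec ghat))) ^ 2 + lam * l1 Uhat ≤
      (n : ℝ)⁻¹ * (l2 (y - Z.mulVec (U.mulVec g))) ^ 2 + lam * l1 U)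
    (hdev1 : inn ((n : ℝ)⁻¹ • Zᵀ.mulVec e) (Δu.mulVec ghat) ≤ lam * l1 Δu / 4)
    (hdev2 : inn ((n : ℝ)⁻¹ • Zᵀ.mulVec e) (U.mulVec Δg) ≤ lam * (∑ i, |Δg i|) / 4)
    (hre : (n : ℝ)⁻¹ * (l2 (Z.mulVec Δ)) ^ 2 ≥ α / 2 * (l2 Δ) ^ 2)
    (hpu : frob Δu ≤ τu * l2 Δ) (hpg : l2 Δg ≤ τg * l2 Δ) :
    l2 Δ ≤ lam * (Real.sqrt q * τg + 3 * Real.sqrt s * τu) / α ∧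
    (n : ℝ)⁻¹ * (l2 (Z.mulVec Δ)) ^ 2 ≤
      lam ^ 2 * (Real.sqrt q * τg + 3 * Real.sqrt s * τu) ^ 2 / (2 * α) := by
  have hd : Δ = Δu.mulVec ghat + U.mulVec Δg := by
    rw [hΔ, hΔu, hΔg, Matrix.sub_mulVec, Matrix.mulVec_sub]; abel
  have hy1 : y - Z.mulVec (Uhat.mulVec ghat) = e - Z.mulVec Δ := by
    rw [hy, hΔ, Matrix.mulVec_sub]; abel
  have hy2 : y - Z.mulVec (U.mulVec g) = e := by
    rw [hy]; abel
  rw [hy1, hy2] at hbasic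
  have hexp : l2 (e - Z.mulVec Δ) ^ 2 =
      l2 e ^ 2 - 2 * ∑ i, e i * Z.mulVec Δ i + l2 (Z.mulVec Δ) ^ 2 := by
    simp only [l2_sq_aux]
    rw [Finset.mul_sum, ← Finset.sum_sub_distrib, ← Finset.sum_add_distrib]
    refine Finset.sum_congr rfl fun i _ => ?_
    simp only [Pi.sub_apply]; ring
  have hin : (n : ℝ)⁻¹ * ∑ i, e i * Z.mulVec Δ i ≤
      lam * l1 Δu / 4 + lam * (∑ i, |Δg i|) / 4 := by
    rw [inn_aux] at hdev1 hdev2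
    have : ∑ i, e i * Z.mulVec Δ i = ∑ i, e i * Z.mulVec (Δu.mulVec ghat) i
        + ∑ i, e i * Z.mulVec (U.mulVec Δg) i := by
      rw [← Finset.sum_add_distrib, hd, Matrix.mulVec_add]
      refine Finset.sum_congr rfl fun i _ => ?_
      simp only [Pi.add_apply]; ring
    rw [this, mul_add]
    linarith
  have hl1 := l1_aux U Uhat Δu hΔu s hS
  have hg := cs_aux Finset.univ Δg
  rw [Finset.card_univ, Fintype.card_fin] at hg
  change _ ≤ Real.sqrt q * l2 Δg at hg
  have hg2 := hg.trans (mul_le_mul_of_nonneg_left hpg (Real.sqrt_nonneg _))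
  have hu2 := mul_le_mul_of_nonneg_left hpu (Real.sqrt_nonneg (s : ℝ))
  have hC : 0 ≤ Real.sqrt q * τg + 3 * Real.sqrt s * τu := by positivity
  have hL : 0 ≤ l2 Δ := Real.sqrt_nonneg _
  have hmain : (n : ℝ)⁻¹ * (l2 (Z.mulVec Δ)) ^ 2 ≤
      lam / 2 * ((Real.sqrt q * τg + 3 * Real.sqrt s * τu) * l2 Δ) := by
    have h1 : (∑ i, |Δg i|) / 2 + (l1 U - l1 Uhat + l1 Δu / 2) ≤
        ((Real.sqrt q * τg + 3 * Real.sqrt s * τu) * l2 Δ) / 2 := by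
      linarith
    have h2 := mul_le_mul_of_nonneg_left h1 hlam.le
    rw [hexp] at hbasic
    linarith
  generalize Real.sqrt q * τg + 3 * Real.sqrt s * τu = C at *
  generalize (n : ℝ)⁻¹ * (l2 (Z.mulVec Δ)) ^ 2 = W at *
  generalize l2 Δ = L at *
  have hfin : L ≤ lam * C / α := by
    rw [le_div_iff₀ hα]
    rcases hL.eq_or_lt with h | h
    · rw [← h, zero_mul]; positivity
    · refine le_of_mul_le_mul_right ?_ h
      linarith
  refine ⟨hfin, hmain.trans ?_⟩
  have h2 := mul_le_mul_of_nonneg_left hfin (by positivity : 0 ≤ lam / 2 * C)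
  calc _ = lam / 2 * C * L := by ring
    _ ≤ _ := h2
    _ = _ := by field_simp
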